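/- Let H be a nonzero additive subgroup of ℚ and let K be a nonzero torsion-free abelian group of finite rank. Let G = H × K, ordered by the positive cone G⁺ = {(h,k) : h > 0} ∪ {(0,0)}. Suppose there exist a nonzero element h₀ ∈ H, a maximal ℤ-linearly independent family x₁, …, x_m of elements of K, and an infinite sequence p₁, p₂, … of (not necessarily distinct) prime numbers such that for every N ∈ ℕ, setting P_N = p₁⋯p_N, one has h₀ ∈ P_N·H and x_j ∈ P_N·K for every j. Then G is ultrasimplicial: for every finite subset F of G⁺ there exists a finite ℤ-linearly independent subset S of G⁺ such that every element of F is a sum of elements of S with nonnegative integer coefficients. -/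

import Mathlib

open TensorProduct

/-- Handelman's intrinsic characterization of ultrasimpliciality, used as the
definition: every finite subset of the positive cone is generated, with
nonnegative integer coefficients, by a finite `ℤ`-linearly independent subset
of the positive cone. -/
def IsUltrasimplicial {G : Type*} [AddCommGroup G] (pos : Set G) : Prop :=
  ∀ F : Finset G, ↑F ⊆ pos →
    ∃ S : Finset G, ↑S ⊆ pos ∧
      LinearIndependent ℤ (fun s : (S : Set G) => (s : G)) ∧
      ∀ f ∈ F, ∃ c : G → ℕ, f = ∑ s ∈ S, c s • s

theorem tf_of_nzsd (K : Type*) [AddCommGroup K] [NoZeroSMulDivisors ℤ K] :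
    Module.IsTorsionFree ℤ K := by
  infer_instance

theorem prod_ge (p : ℕ → ℕ) (hp : ∀ i, (p i).Prime) (N : ℕ) :
    N ≤ ∏ i ∈ Finset.range N, p i := by
  have h : 2 ^ N ≤ ∏ i ∈ Finset.range N, p i := by
    have := Finset.prod_le_prod' (s := Finset.range N) (f := fun _ => 2) (g := p)
      (fun i _ => (hp i).two_le)
    simpa using this
  exact (Nat.lt_two_pow_self).le.trans h

theorem div_of_multiple {G : Type*} [AddCommGroup G] [Module.IsTorsionFree ℤ G]
    (u y : G) (c : ℤ) (hc : c ≠ 0) (P : ℕ) (h : c • u = (P : ℤ) • y) (B : ℕ)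
    (hB : B * c.natAbs ≤ P) : ∃ b : ℕ, B ≤ b ∧ ∃ s : G, u = (b : ℤ) • s := by
  have hg : 0 < Int.gcd c P := Int.gcd_pos_of_ne_zero_left _ hc
  obtain ⟨c', hc'⟩ : ((Int.gcd c P : ℕ) : ℤ) ∣ c := Int.gcd_dvd_left ..
  obtain ⟨b, hb⟩ : Int.gcd c P ∣ P := by
    have : ((Int.gcd c P : ℕ) : ℤ) ∣ (P : ℤ) := Int.gcd_dvd_right ..
    exact_mod_cast this
  set g := Int.gcd c P with hgdef
  have hgle : g ≤ c.natAbs := Nat.le_of_dvd (Int.natAbs_pos.2 hc) (by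
    rw [hgdef]; exact Int.natCast_dvd.1 (Int.gcd_dvd_left ..))
  have hBb : B ≤ b := by
    have h1 : B * g ≤ b * g := by
      calc B * g ≤ B * c.natAbs := Nat.mul_le_mul_left _ hgle
        _ ≤ P := hB
        _ = b * g := by rw [mul_comm]; exact hb
    exact Nat.le_of_mul_le_mul_right h1 hg
  have hbez := Int.gcd_eq_gcd_ab c P
  rw [← hgdef] at hbez
  set α := Int.gcdA c P
  set β := Int.gcdB c P
  have hg0 : (g : ℤ) ≠ 0 := by exact_mod_cast hg.ne'
  have hPb : (P : ℤ) = g * b := by exact_mod_cast hb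
  have h1 : c' * α + b * β = 1 := by
    apply mul_left_cancel₀ hg0
    rw [hPb] at hbez
    linear_combination -hbez - α * hc'
  have h2 : c' • u = (b : ℤ) • y := by
    apply smul_right_injective G hg0
    simp only [smul_smul]
    rw [← hc', ← hPb, h]
  refine ⟨b, hBb, α • y + β • u, ?_⟩
  calc u = (c' * α + b * β) • u := by rw [h1, one_smul]
    _ = α • (c' • u) + b • (β • u) := by
      rw [add_smul, mul_comm c', mul_smul, mul_smul]; simp
    _ = _ := by
      rw [h2, smul_add, smul_comm]; simp

theorem exists_div (H : AddSubgroup ℚ)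
    (K : Type*) [AddCommGroup K] [Module.IsTorsionFree ℤ K]
    (m : ℕ) (x : Fin m → K)
    (hxmax : ∀ k : K, ∃ c : ℤ, c ≠ 0 ∧ c • k ∈ Submodule.span ℤ (Set.range x))
    (h₀ : H) (hh₀ : (h₀ : ℚ) ≠ 0)
    (p : ℕ → ℕ) (hp : ∀ i, (p i).Prime)
    (hdiv : ∀ N : ℕ,
      (∃ b : H, h₀ = (∏ i ∈ Finset.range N, p i) • b) ∧
      (∀ j : Fin m, ∃ b : K, x j = (∏ i ∈ Finset.range N, p i) • b))
    (u : H × K) (B : ℕ) : ∃ b : ℕ, B ≤ b ∧ ∃ s : H × K, u = (b : ℤ) • s := by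
  obtain ⟨c2, hc2, hk⟩ := hxmax u.2
  obtain ⟨c1, n, hc1, hh⟩ : ∃ c1 n : ℤ, c1 ≠ 0 ∧ c1 • u.1 = n • h₀ := by
    refine ⟨(u.1 : ℚ).den * (h₀ : ℚ).num, (u.1 : ℚ).num * (h₀ : ℚ).den, ?_, ?_⟩
    · have := (u.1 : ℚ).den_nz
      have := Rat.num_ne_zero.2 hh₀
      positivity
    · apply Subtype.ext
      have e1 := Rat.mul_den_eq_num (u.1 : ℚ)
      have e2 := Rat.mul_den_eq_num (h₀ : ℚ)
      simp only [AddSubgroup.coe_zsmul, zsmul_eq_mul]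
      push_cast
      rw [← e1, ← e2]; ring
  let N := B * (c1 * c2).natAbs
  obtain ⟨⟨b0, hb0⟩, hx⟩ := hdiv N
  have hP := prod_ge p hp N
  set P := ∏ i ∈ Finset.range N, p i
  have hk' : ∃ b : K, c2 • u.2 = (P : ℤ) • b := by
    have : Submodule.span ℤ (Set.range x) ≤ LinearMap.range (LinearMap.lsmul ℤ K (P : ℤ)) := by
      rw [Submodule.span_le]
      rintro _ ⟨j, rfl⟩
      obtain ⟨b, hb⟩ := hx j
      exact ⟨b, by simp [hb]⟩
    obtain ⟨b, hb⟩ := this hk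
    exact ⟨b, by rw [← hb]; simp⟩
  obtain ⟨b, hb⟩ := hk'
  refine div_of_multiple u (c2 • n • b0, c1 • b) (c1 * c2) (mul_ne_zero hc1 hc2) P ?_ B hP
  ext1
  · change (c1 * c2) • u.1 = (P : ℤ) • (c2 • n • b0)
    rw [mul_comm, mul_smul, hh, hb0, smul_comm (P : ℤ), smul_comm (P : ℤ)]
    simp
  · change (c1 * c2) • u.2 = (P : ℤ) • (c1 • b)
    rw [mul_smul, hb, smul_comm]

/-- a common generator of finitely many elements of `H` -/
theorem exists_gen (H : AddSubgroup ℚ) (T : Finset H) :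
    ∃ a : H, ∀ t ∈ T, ∃ n : ℤ, t = n • a := by
  classical
  let M : Submodule ℤ ℚ := Submodule.span ℤ ((T.image (fun t : H => (t : ℚ)) : Finset ℚ) : Set ℚ)
  have hfg : M.FG := ⟨_, rfl⟩
  have hfr : IsFractional (nonZeroDivisors ℤ) M := FractionalIdeal.isFractional_of_fg hfg
  have hpr : M.IsPrincipal := FractionalIdeal.isPrincipal (R := ℤ) (K := ℚ) ⟨M, hfr⟩
  obtain ⟨a, ha⟩ := hpr
  have hMH : M ≤ AddSubgroup.toIntSubmodule H := by
    rw [Submodule.span_le]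
    intro y hy
    simp only [Finset.coe_image, Set.mem_image] at hy
    obtain ⟨t, -, rfl⟩ := hy
    exact t.2
  have haM : a ∈ M := by rw [ha]; exact Submodule.mem_span_singleton_self a
  refine ⟨⟨a, hMH haM⟩, fun t ht => ?_⟩
  have htM : (t : ℚ) ∈ M := Submodule.subset_span (by
    simp only [Finset.coe_image, Set.mem_image]; exact ⟨t, ht, rfl⟩)
  rw [ha, Submodule.mem_span_singleton] at htM
  obtain ⟨n, hn⟩ := htM
  exact ⟨n, Subtype.ext (by simpa using hn.symm)⟩

theorem exists_gen_pos (H : AddSubgroup ℚ) (T : Finset H) (hT : ∀ t ∈ T, 0 < (t : ℚ))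
    (hne : T.Nonempty) :
    ∃ a : H, 0 < (a : ℚ) ∧ ∀ t ∈ T, ∃ n : ℕ, 0 < n ∧ t = (n : ℤ) • a := by
  obtain ⟨a, ha⟩ := exists_gen H T
  have key : ∃ a : H, 0 < (a : ℚ) ∧ ∀ t ∈ T, ∃ n : ℤ, t = n • a := by
    rcases lt_trichotomy (a : ℚ) 0 with h | h | h
    · refine ⟨-a, by simpa using h, fun t ht => ?_⟩
      obtain ⟨n, hn⟩ := ha t ht
      exact ⟨-n, by simp [hn]⟩
    · obtain ⟨t, ht⟩ := hne
      obtain ⟨n, hn⟩ := ha t ht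
      have := hT t ht
      rw [hn] at this
      simp [h] at this
    · exact ⟨a, h, ha⟩
  obtain ⟨a, ha0, ha⟩ := key
  refine ⟨a, ha0, fun t ht => ?_⟩
  obtain ⟨n, hn⟩ := ha t ht
  have h1 := hT t ht
  have hn0 : 0 < n := by
    rw [hn] at h1
    simp only [AddSubgroup.coe_zsmul, zsmul_eq_mul] at h1
    exact_mod_cast (pos_iff_pos_of_mul_pos h1).2 ha0
  refine ⟨n.toNat, by omega, ?_⟩
  rw [hn, Int.toNat_of_nonneg hn0.le]

theorem exists_basis (K : Type*) [AddCommGroup K] [Module.IsTorsionFree ℤ K] (T : Finset K) :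
    ∃ (n : ℕ) (e : Fin n → K), LinearIndependent ℤ e ∧
      ∀ t ∈ T, ∃ c : Fin n → ℤ, t = ∑ i, c i • e i := by
  let M : Submodule ℤ K := Submodule.span ℤ (T : Set K)
  have : Module.Finite ℤ M := Module.Finite.iff_fg.2 ⟨T, rfl⟩
  let b := Module.finBasis ℤ M
  refine ⟨_, fun i => (b i : K), ?_, fun t ht => ?_⟩
  · exact b.linearIndependent.map' M.subtype (by simp)
  · refine ⟨fun i => b.repr ⟨t, Submodule.subset_span ht⟩ i, ?_⟩
    have h := congrArg (M.subtype) (b.sum_repr ⟨t, Submodule.subset_span ht⟩)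
    rw [map_sum] at h
    exact h.symm

theorem statement0
    (H : AddSubgroup ℚ) (hH : H ≠ ⊥)
    (K : Type*) [AddCommGroup K] [NoZeroSMulDivisors ℤ K] [Nontrivial K]
    [Module.Finite ℚ (ℚ ⊗[ℤ] K)]
    (m : ℕ) (x : Fin m → K)
    (hxind : LinearIndependent ℤ x)
    (hxmax : ∀ k : K, ∃ c : ℤ, c ≠ 0 ∧ c • k ∈ Submodule.span ℤ (Set.range x))
    (h₀ : H) (hh₀ : (h₀ : ℚ) ≠ 0)
    (p : ℕ → ℕ) (hp : ∀ i, (p i).Prime)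
    (hdiv : ∀ N : ℕ,
      (∃ b : H, h₀ = (∏ i ∈ Finset.range N, p i) • b) ∧
      (∀ j : Fin m, ∃ b : K, x j = (∏ i ∈ Finset.range N, p i) • b)) :
    IsUltrasimplicial ({g : H × K | 0 < (g.1 : ℚ)} ∪ {0}) := by
  classical
  have : Module.IsTorsionFree ℤ K := tf_of_nzsd K
  intro F hF
  let F' := F.filter (fun g => g ≠ 0)
  have hF' : ∀ f ∈ F', 0 < (f.1 : ℚ) := by
    intro f hf
    obtain ⟨h1, h2⟩ := Finset.mem_filter.1 hf
    rcases hF h1 with h | h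
    · exact h
    · exact absurd h h2
  rcases F'.eq_empty_or_nonempty with hemp | hne
  · refine ⟨∅, by simp, ?_, ?_⟩
    · have : IsEmpty ((∅ : Finset (H × K)) : Set (H × K)) := by simp
      exact linearIndependent_empty_type
    · intro f hf
      refine ⟨0, ?_⟩
      by_contra h
      have : f ∈ F' := Finset.mem_filter.2 ⟨hf, by simpa using h⟩
      rw [hemp] at this
      simp at this
  obtain ⟨a, ha0, ha⟩ := exists_gen_pos H (F'.image Prod.fst)
    (by simpa using fun a ha b hb => hF' _ hb) (hne.image _)
  obtain ⟨n, e, he, hk⟩ := exists_basis K (F'.image Prod.snd)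
  have ha' : ∀ f : H × K, ∃ r : ℕ, f ∈ F' → 0 < r ∧ f.1 = (r : ℤ) • a := by
    intro f
    by_cases hf : f ∈ F'
    · obtain ⟨r, h⟩ := ha f.1 (Finset.mem_image_of_mem _ hf)
      exact ⟨r, fun _ => h⟩
    · exact ⟨0, fun h => absurd h hf⟩
  have hk' : ∀ f : H × K, ∃ c : Fin n → ℤ, f ∈ F' → f.2 = ∑ i, c i • e i := by
    intro f
    by_cases hf : f ∈ F'
    · obtain ⟨r, h⟩ := hk f.2 (Finset.mem_image_of_mem _ hf)
      exact ⟨r, fun _ => h⟩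
    · exact ⟨0, fun h => absurd h hf⟩
  choose r hr using ha'
  choose c hc using hk'
  let t : ℕ := ∑ f ∈ F', ∑ i, (c f i).natAbs
  have ht : ∀ f ∈ F', ∀ i, 0 ≤ c f i + r f * t := by
    intro f hf i
    have h1 : (c f i).natAbs ≤ t :=
      (Finset.single_le_sum (f := fun i => (c f i).natAbs) (fun _ _ => Nat.zero_le _)
        (Finset.mem_univ i)).trans
      (Finset.single_le_sum (f := fun f => ∑ i, (c f i).natAbs) (fun _ _ => Nat.zero_le _) hf)
    have h2 : t ≤ r f * t := Nat.le_mul_of_pos_left _ (hr f hf).1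
    have h3 : (t : ℤ) ≤ r f * t := by exact_mod_cast h2
    omega
  let u : H × K := (a, - ∑ i, (t : ℤ) • e i)
  let B : ℕ := 1 + ∑ f ∈ F', ∑ i, (c f i + r f * t).toNat
  obtain ⟨b, hBb, s, hs⟩ := exists_div H K m x hxmax h₀ hh₀ p hp hdiv u B
  have hs1 : a = (b : ℤ) • s.1 := congrArg Prod.fst hs
  have hs2 : - ∑ i, (t : ℤ) • e i = (b : ℤ) • s.2 := congrArg Prod.snd hs
  have hs0 : 0 < (s.1 : ℚ) := by
    have h1 := ha0
    rw [hs1] at h1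
    simp only [AddSubgroup.coe_zsmul, zsmul_eq_mul] at h1
    refine (pos_iff_pos_of_mul_pos h1).1 ?_
    have : 0 < b := by omega
    exact_mod_cast this
  let g : Option (Fin n) → H × K := fun o => o.elim s (fun i => s + (0, e i))
  have hg : LinearIndependent ℤ g := by
    rw [Fintype.linearIndependent_iff]
    intro d hd
    rw [Fintype.sum_option] at hd
    have hd1 := congrArg Prod.fst hd
    have hd2 := congrArg Prod.snd hd
    simp only [g, Option.elim, Prod.fst_add, Prod.snd_add, Prod.fst_sum, Prod.snd_sum,
      Prod.smul_fst, Prod.smul_snd, add_zero, Prod.fst_zero, Prod.snd_zero, smul_add,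
      Finset.sum_add_distrib, ← Finset.sum_smul] at hd1 hd2
    rw [smul_zero, add_zero, ← add_smul] at hd1
    rw [← add_assoc, ← add_smul] at hd2
    have hz : d none + ∑ i, d (some i) = 0 := by
      have := congrArg (fun z : H => (z : ℚ)) hd1
      simp only [AddSubgroup.coe_zsmul, zsmul_eq_mul, ZeroMemClass.coe_zero] at this
      rcases mul_eq_zero.1 this with h | h
      · exact_mod_cast h
      · exact absurd h hs0.ne'
    rw [hz, zero_smul, zero_add] at hd2
    have hi := Fintype.linearIndependent_iff.1 he _ hd2
    intro o
    cases o with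
    | none => simpa [hi] using hz
    | some i => exact hi i
  have hinj : Function.Injective g := hg.injective
  refine ⟨Finset.univ.image g, ?_, ?_, ?_⟩
  · intro y hy
    simp only [Finset.coe_image, Finset.coe_univ, Set.image_univ, Set.mem_range] at hy
    obtain ⟨o, rfl⟩ := hy
    left
    cases o with
    | none => exact hs0
    | some i => simpa [g] using hs0
  · have h := hg.linearIndepOn_id
    have e1 : ((Finset.univ.image g : Finset (H × K)) : Set (H × K)) = Set.range g := by simp
    rw [e1]
    exact h
  · intro f hf
    by_cases hf0 : f = 0
    · exact ⟨0, by simp [hf0]⟩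
    have hfF : f ∈ F' := Finset.mem_filter.2 ⟨hf, hf0⟩
    let w : Fin n → ℕ := fun i => (c f i + r f * t).toNat
    have hw : ∀ i, (w i : ℤ) = c f i + r f * t := fun i => Int.toNat_of_nonneg (ht f hfF i)
    have hle : ∑ i, w i ≤ r f * b := by
      have h1 : ∑ i, w i ≤ ∑ f ∈ F', ∑ i, (c f i + r f * t).toNat :=
        Finset.single_le_sum (f := fun f => ∑ i, (c f i + r f * t).toNat)
          (fun _ _ => Nat.zero_le _) hfF
      have h2 : b ≤ r f * b := Nat.le_mul_of_pos_left _ (hr f hfF).1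
      omega
    obtain ⟨w0, hw0⟩ := Nat.exists_eq_add_of_le hle
    let d : Option (Fin n) → ℕ := fun o => o.elim w0 w
    refine ⟨Function.extend g d 0, ?_⟩
    rw [Finset.sum_image (fun _ _ _ _ h => hinj h)]
    simp only [hinj.extend_apply]
    rw [Fintype.sum_option]
    simp only [d, g, Option.elim, smul_add, Finset.sum_add_distrib, ← Finset.sum_smul]
    rw [← add_assoc, ← add_smul, add_comm w0, ← hw0]
    ext1
    · rw [(hr f hfF).2, hs1]
      simp only [Prod.fst_add, Prod.fst_sum, Prod.smul_fst, smul_zero, Finset.sum_const_zero,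
        add_zero]
      rw [mul_smul]; simp
    · rw [hc f hfF]
      simp only [Prod.snd_add, Prod.snd_sum, Prod.smul_snd]
      have : (r f * b) • s.2 = (r f : ℤ) • (- ∑ i, (t : ℤ) • e i) := by
        rw [hs2, mul_smul]; simp
      rw [this, smul_neg, Finset.smul_sum, neg_add_eq_sub, ← Finset.sum_sub_distrib]
      refine Finset.sum_congr rfl fun i _ => ?_
      rw [← natCast_zsmul (e i) (w i), hw, add_smul, mul_smul]
      simp
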